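/- Let n ≥ k and let V be a complex inner product space of finite complex dimension k. For any two continuous linear maps A, B : EuclideanSpace ℂ (Fin n) → V satisfying A ∘ A* = id_V and B ∘ B* = id_V, there exist a complex-linear isometric equivalence M : V ≃ V and a complex-linear isometric equivalence N : EuclideanSpace ℂ (Fin n) ≃ EuclideanSpace ℂ (Fin n) such that B = M ∘ A ∘ N⁻¹. In other words, the group U(V) × U(n) acts transitively on the space of complex n-Parseval frames in V. -/

import Mathlib

/-!
Since `‖A* v‖² = re ⟪A A* v, v⟫`, the equality `A A* = B B*` makes `A* v ↦ B* v` a well-defined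
linear isometry on the range of `A*`. In finite dimension it extends to a unitary `N` with
`N A* = B*`, and taking adjoints gives `B = A N⁻¹`: the factor `U(V)` can be taken trivial.
-/

open ContinuousLinearMap (adjoint)

section Normed

variable {𝕜 V E F : Type*} [DivisionRing 𝕜] [AddCommGroup V] [Module 𝕜 V]
  [SeminormedAddCommGroup E] [Module 𝕜 E] [NormedAddCommGroup F] [Module 𝕜 F]

lemma exists_linearIsometry_range_apply_eq_of_norm_eq (f : V →ₗ[𝕜] E) (g : V →ₗ[𝕜] F)
    (h : ∀ v, ‖f v‖ = ‖g v‖) :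
    ∃ L : f.range →ₗᵢ[𝕜] F, ∀ v, L (f.rangeRestrict v) = g v := by
  obtain ⟨s, hs⟩ := f.rangeRestrict.exists_rightInverse_of_surjective f.range_rangeRestrict
  have f_section (y : f.range) : f (s y) = y := congrArg Subtype.val (LinearMap.congr_fun hs y)
  refine ⟨⟨g ∘ₗ s, fun y ↦ ?_⟩, fun v ↦ ?_⟩
  · calc ‖g (s y)‖ = ‖f (s y)‖ := (h _).symm
      _ = ‖y‖ := congrArg norm (f_section y)
  · have g_sub : g (s (f.rangeRestrict v) - v) = 0 := by
      rw [← norm_eq_zero, ← h, map_sub, f_section, LinearMap.codRestrict_apply, sub_self,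
        norm_zero]
    exact sub_eq_zero.mp ((map_sub g _ _).symm.trans g_sub)

end Normed

section InnerProductSpace

variable {𝕜 V E F : Type*} [RCLike 𝕜] [NormedAddCommGroup E] [InnerProductSpace 𝕜 E]

lemma exists_linearIsometryEquiv_apply_eq_of_norm_eq [FiniteDimensional 𝕜 E] [AddCommGroup V]
    [Module 𝕜 V] (f g : V →ₗ[𝕜] E) (h : ∀ v, ‖f v‖ = ‖g v‖) :
    ∃ N : E ≃ₗᵢ[𝕜] E, ∀ v, N (f v) = g v := by
  obtain ⟨L, hL⟩ := exists_linearIsometry_range_apply_eq_of_norm_eq f g h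
  exact ⟨L.extend.toLinearIsometryEquiv rfl,
    fun v ↦ (L.extend_apply (f.rangeRestrict v)).trans (hL v)⟩

variable [CompleteSpace E] [NormedAddCommGroup F] [InnerProductSpace 𝕜 F] [CompleteSpace F]
  [NormedAddCommGroup V] [InnerProductSpace 𝕜 V] [CompleteSpace V]

lemma norm_adjoint_apply_eq_of_comp_adjoint_eq {A : E →L[𝕜] V} {B : F →L[𝕜] V}
    (h : A ∘L adjoint A = B ∘L adjoint B) (v : V) : ‖adjoint A v‖ = ‖adjoint B v‖ := by
  simp only [ContinuousLinearMap.apply_norm_eq_sqrt_inner_adjoint_left,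
    ContinuousLinearMap.adjoint_adjoint, h]

end InnerProductSpace

theorem unitary_transitive_on_complex_parseval_general {𝕜 E V : Type*} [RCLike 𝕜]
    [NormedAddCommGroup E] [InnerProductSpace 𝕜 E] [FiniteDimensional 𝕜 E] [CompleteSpace E]
    [NormedAddCommGroup V] [InnerProductSpace 𝕜 V] [CompleteSpace V] (A B : E →L[𝕜] V)
    (h : A ∘L adjoint A = B ∘L adjoint B) :
    ∃ N : E ≃ₗᵢ[𝕜] E, ∀ x, B x = A (N.symm x) := by
  obtain ⟨N, hN⟩ := exists_linearIsometryEquiv_apply_eq_of_norm_eq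
    (adjoint A).toLinearMap (adjoint B).toLinearMap (norm_adjoint_apply_eq_of_comp_adjoint_eq h)
  refine ⟨N, fun x ↦ ext_inner_left 𝕜 fun v ↦ ?_⟩
  calc inner 𝕜 v (B x) = inner 𝕜 (adjoint B v) x := (B.adjoint_inner_left x v).symm
    _ = inner 𝕜 (N (adjoint A v)) x := congrArg (inner 𝕜 · x) (hN v).symm
    _ = inner 𝕜 (adjoint A v) (N.symm x) := N.inner_map_eq_flip _ _
    _ = inner 𝕜 v (A (N.symm x)) := A.adjoint_inner_left _ v

/-- The group `U(V) × U(n)` acts transitively on the space of complex `n`-Parseval frames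
in `V`: any two complex Parseval frames `A, B` are related by `B = M ∘ A ∘ N⁻¹` for
complex-linear isometric equivalences `M` of `V` and `N` of `EuclideanSpace ℂ (Fin n)`. -/
theorem unitary_transitive_on_complex_parseval {n k : ℕ} (hnk : k ≤ n) {V : Type*}
    [NormedAddCommGroup V] [InnerProductSpace ℂ V] [FiniteDimensional ℂ V]
    (hV : Module.finrank ℂ V = k) (A B : EuclideanSpace ℂ (Fin n) →L[ℂ] V)
    (hA : A ∘L ContinuousLinearMap.adjoint A = ContinuousLinearMap.id ℂ V)
    (hB : B ∘L ContinuousLinearMap.adjoint B = ContinuousLinearMap.id ℂ V) :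
    ∃ (M : V ≃ₗᵢ[ℂ] V)
      (N : EuclideanSpace ℂ (Fin n) ≃ₗᵢ[ℂ] EuclideanSpace ℂ (Fin n)),
      ∀ x : EuclideanSpace ℂ (Fin n), B x = M (A (N.symm x)) := by
  obtain ⟨N, hN⟩ := unitary_transitive_on_complex_parseval_general A B (hA.trans hB.symm)
  exact ⟨LinearIsometryEquiv.refl ℂ V, N, hN⟩
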